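/- The R-linear map U^{<0} ⊗_R U^{≥0} → U induced by multiplication (y ⊗ x ↦ y·x) is bijective, i.e. multiplication induces an isomorphism of R-modules from U^{<0} ⊗_R U^{≥0} onto U. -/

import Mathlib

open scoped TensorProduct

noncomputable section

/-- The base ring `R = ℂ[[ℏ]]`. -/
abbrev R : Type := PowerSeries ℂ

/-- The formal variable `ℏ ∈ ℂ[[ℏ]]`. -/
def hbar : R := PowerSeries.X

/-- The generators `e_n` of the free algebra. -/
def E (n : ℤ) : FreeAlgebra R ℤ := FreeAlgebra.ι R n

/-- The defining relations of `U_ℏ𝔫₊`: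
`e_{m+1}e_n − e_n e_{m+1} − e_m e_{n+1} + e_{n+1}e_m = ℏ(e_m e_n + e_n e_m)`. -/
inductive ERel : FreeAlgebra R ℤ → FreeAlgebra R ℤ → Prop
  | current (m n : ℤ) :
      ERel (E (m + 1) * E n - E n * E (m + 1) - E m * E (n + 1) + E (n + 1) * E m)
        (hbar • (E m * E n + E n * E m))

/-- `U = U_ℏ𝔫₊`, the quotient of the free `R`-algebra on the `e_n`, `n ∈ ℤ`,
by the two-sided ideal generated by the defining relations. -/
abbrev U : Type := RingQuot ERel

/-- The image of `e_n` in `U`. -/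
def e (n : ℤ) : U := RingQuot.mkAlgHom R ERel (E n)

/-- `U^{≥0}`, the `R`-subalgebra of `U` generated by the `e_n` with `n ≥ 0`. -/
def Uge : Subalgebra R U := Algebra.adjoin R (Set.range fun n : ℕ => e (n : ℤ))

/-- `U^{<0}`, the `R`-subalgebra of `U` generated by the `e_n` with `n < 0`. -/
def Ult : Subalgebra R U := Algebra.adjoin R {x : U | ∃ n : ℤ, n < 0 ∧ x = e n}


section PBW

/-- The monomial attached to a word. -/
def mon (l : List ℤ) : U := (l.map e).prod

/-- The ordered monomial attached to a multiset. -/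
def omon (s : Multiset ℤ) : U := mon (s.sort (· ≤ ·))

lemma mon_append (l l' : List ℤ) : mon (l ++ l') = mon l * mon l' := by
  simp [mon]

lemma mon_cons (a : ℤ) (l : List ℤ) : mon (a :: l) = e a * mon l := by
  simp [mon]

lemma e_rel (m n : ℤ) :
    e (m + 1) * e n - e n * e (m + 1) - e m * e (n + 1) + e (n + 1) * e m =
      hbar • (e m * e n + e n * e m) := by
  have h := RingQuot.mkAlgHom_rel R (ERel.current m n)
  simp only [map_add, map_sub, map_mul, map_smul] at h
  exact h

/-- Span of the quadratic monomials that occur in a commutator. -/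
def quadSpan (b a d : ℤ) : Submodule R U :=
  Submodule.span R {x | ∃ p q : ℤ, b ≤ p ∧ b ≤ q ∧ p < a ∧ q < a ∧ p + q = d ∧ x = e p * e q}

lemma comm_diff (b a : ℤ) (k : ℕ) : ∀ m n : ℤ, b ≤ m → b ≤ n → m + k ≤ a → n + k ≤ a →
    (e (m + k) * e n - e n * e (m + k)) - (e m * e (n + k) - e (n + k) * e m) ∈
      quadSpan b a (m + n + k - 1) := by
  induction k with
  | zero =>
    intro m n _ _ _ _
    have h0 : (e (m + (0 : ℕ)) * e n - e n * e (m + (0 : ℕ))) -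
        (e m * e (n + (0 : ℕ)) - e (n + (0 : ℕ)) * e m) = 0 := by
      simp only [Nat.cast_zero, add_zero]
      exact sub_self (e m * e n - e n * e m)
    rw [h0]
    exact Submodule.zero_mem _
  | succ k ih =>
    intro m n hm hn hma hna
    push_cast at hma hna ⊢
    have h1 := ih m (n + 1) hm (by omega) (by omega) (by omega)
    have h2 := e_rel (m + k) n
    have e1 : m + (n + 1) + (k : ℤ) - 1 = m + n + (k + 1) - 1 := by ring
    have e2 : n + 1 + (k : ℤ) = n + (k + 1) := by ring
    have e3 : m + (k : ℤ) + 1 = m + (k + 1) := by ring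
    rw [e1, e2] at h1
    rw [e3] at h2
    have h3 : hbar • (e (m + k) * e n + e n * e (m + k)) ∈
        quadSpan b a (m + n + (k + 1) - 1) := by
      refine Submodule.smul_mem _ _ (Submodule.add_mem _ ?_ ?_)
      · exact Submodule.subset_span ⟨m + k, n, by omega, by omega, by omega, by omega,
          by omega, rfl⟩
      · exact Submodule.subset_span ⟨n, m + k, by omega, by omega, by omega, by omega,
          by omega, rfl⟩
    rw [← h2] at h3
    have h4 := Submodule.add_mem _ h1 h3
    convert h4 using 1
    abel

lemma comm_mem (a b : ℤ) (hab : b < a) :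
    e a * e b - e b * e a ∈ quadSpan b a (a + b - 1) := by
  obtain ⟨k, rfl⟩ : ∃ k : ℕ, a = b + k := ⟨(a - b).toNat, by omega⟩
  have h := comm_diff b (b + k) k b b le_rfl le_rfl le_rfl le_rfl
  have e1 : b + k + b - 1 = b + b + (k : ℤ) - 1 := by ring
  rw [e1]
  have h2 := Submodule.smul_mem _ (PowerSeries.C (1 / 2 : ℂ)) h
  convert h2 using 1
  have h3 : (e (b + k) * e b - e b * e (b + k)) - (e b * e (b + k) - e (b + k) * e b) =
      (2 : R) • (e (b + k) * e b - e b * e (b + k)) := by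
    rw [two_smul]; abel
  rw [h3, smul_smul]
  have h4 : (PowerSeries.C (1 / 2 : ℂ)) * (2 : R) = 1 := by
    have : (2 : R) = PowerSeries.C (2 : ℂ) := (map_ofNat PowerSeries.C 2).symm
    rw [this, ← map_mul]; norm_num
  rw [h4, one_smul]

lemma split_aux {V : Type*} [Ring V] (u a b v : V) :
    u * (a * (b * v)) = u * (b * a) * v + u * (a * b - b * a) * v := by
  noncomm_ring

/-- A weight that decreases under rewriting. -/
def wt (m : ℤ) : List ℤ → ℤ
  | [] => 0
  | a :: l => (l.length + 1) * (a - m) + wt m l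

lemma wt_nonneg (m : ℤ) (l : List ℤ) (h : ∀ x ∈ l, m ≤ x) : 0 ≤ wt m l := by
  induction l with
  | nil => simp [wt]
  | cons a l ih =>
    simp only [List.mem_cons, forall_eq_or_imp] at h
    have := ih h.2
    have h1 : 0 ≤ a - m := by linarith [h.1]
    simp only [wt]
    positivity

lemma wt_append_lt (m : ℤ) (u v w : List ℤ) (hl : v.length = w.length) (h : wt m v < wt m w) :
    wt m (u ++ v) < wt m (u ++ w) := by
  induction u with
  | nil => simpa
  | cons a u ih => simp only [List.cons_append, wt, List.length_append, hl]; linarith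

lemma exists_descent (l : List ℤ) (h : ¬ l.Pairwise (· ≤ ·)) :
    ∃ u a b v, l = u ++ a :: b :: v ∧ b < a := by
  induction l with
  | nil => simp at h
  | cons x l ih =>
    by_cases hl : l.Pairwise (· ≤ ·)
    · cases l with
      | nil => simp at h
      | cons y l =>
        by_cases hxy : x ≤ y
        · exfalso
          apply h
          rw [List.pairwise_cons]
          refine ⟨?_, hl⟩
          intro z hz
          rw [List.pairwise_cons] at hl
          rcases List.mem_cons.1 hz with rfl | hz
          · exact hxy
          · exact hxy.trans (hl.1 z hz)
        · exact ⟨[], x, y, l, rfl, not_le.1 hxy⟩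
    · obtain ⟨u, a, b, v, rfl, hab⟩ := ih hl
      exact ⟨x :: u, a, b, v, rfl, hab⟩

/-- Span of the ordered monomials with indices in `I`. -/
def ospan (I : Set ℤ) : Submodule R U :=
  Submodule.span R (omon '' {s | ∀ x ∈ s, x ∈ I})

lemma mon_mem_ospan_aux (I : Set ℤ) (hI : I.OrdConnected) (m : ℤ) (k : ℕ) :
    ∀ l : List ℤ, (∀ x ∈ l, x ∈ I) → (∀ x ∈ l, m ≤ x) → wt m l < k → mon l ∈ ospan I := by
  induction k with
  | zero =>
    intro l _ hm hk
    have := wt_nonneg m l hm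
    simp at hk
    omega
  | succ k ih =>
    intro l hlI hm hk
    by_cases hs : l.Pairwise (· ≤ ·)
    · refine Submodule.subset_span ⟨(l : Multiset ℤ), by simpa using hlI, ?_⟩
      rw [omon]
      congr 1
      refine List.Perm.eq_of_pairwise' (r := (· ≤ ·)) (Multiset.pairwise_sort _ _) hs ?_
      rw [← Multiset.coe_eq_coe, Multiset.sort_eq]
    · obtain ⟨u, a, b, v, rfl, hab⟩ := exists_descent l hs
      have key : ∀ p q : ℤ, b ≤ p → b ≤ q → p ≤ a → q ≤ a →
          wt m (p :: q :: v) < wt m (a :: b :: v) → mon u * (e p * e q) * mon v ∈ ospan I := by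
        intro p q h1 h2 h3 h4 hw
        have hw' := wt_append_lt m u (p :: q :: v) (a :: b :: v) (by simp) hw
        have : mon u * (e p * e q) * mon v = mon (u ++ p :: q :: v) := by
          simp [mon_append, mon_cons, mul_assoc]
        rw [this]
        have haI := hlI a (by simp)
        have hbI := hlI b (by simp)
        have hbm := hm b (by simp)
        refine ih _ ?_ ?_ (by push_cast at hk; omega)
        · intro x hx
          simp only [List.mem_append, List.mem_cons] at hx
          rcases hx with hx | rfl | rfl | hx
          · exact hlI x (by simp [hx])
          · exact hI.out hbI haI ⟨h1, h3⟩
          · exact hI.out hbI haI ⟨h2, h4⟩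
          · exact hlI x (by simp [hx])
        · intro x hx
          simp only [List.mem_append, List.mem_cons] at hx
          rcases hx with hx | rfl | rfl | hx
          · exact hm x (by simp [hx])
          · omega
          · omega
          · exact hm x (by simp [hx])
      have hsplit : mon (u ++ a :: b :: v) =
          mon u * (e b * e a) * mon v + mon u * (e a * e b - e b * e a) * mon v := by
        simp only [mon_append, mon_cons]; exact split_aux (V := U) _ _ _ _
      rw [hsplit]
      refine Submodule.add_mem _ (key b a le_rfl hab.le hab.le le_rfl ?_) ?_
      · simp only [wt, List.length_cons]; push_cast; nlinarith
      · have hc := comm_mem a b hab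
        have hle : quadSpan b a (a + b - 1) ≤ (ospan I).comap
            ((LinearMap.mulRight R (mon v)).comp (LinearMap.mulLeft R (mon u))) := by
          refine Submodule.span_le.2 ?_
          rintro _ ⟨p, q, h1, h2, h3, h4, h5, rfl⟩
          refine key p q h1 h2 h3.le h4.le ?_
          simp only [wt, List.length_cons]; push_cast
          have : q = a + b - 1 - p := by omega
          subst this
          nlinarith [(Nat.cast_nonneg v.length : (0 : ℤ) ≤ v.length)]
        exact hle hc

lemma mon_mem_ospan (I : Set ℤ) (hI : I.OrdConnected) (l : List ℤ) (hl : ∀ x ∈ l, x ∈ I) :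
    mon l ∈ ospan I := by
  obtain ⟨m, hm⟩ : ∃ m, ∀ x ∈ l, m ≤ x := by
    obtain ⟨m, hm⟩ := (List.finite_toSet l).bddBelow
    exact ⟨m, fun x hx => hm hx⟩
  refine mon_mem_ospan_aux I hI m (wt m l + 1).toNat l hl hm ?_
  have := wt_nonneg m l hm
  omega

lemma adjoin_le_ospan (I : Set ℤ) (hI : I.OrdConnected) :
    Subalgebra.toSubmodule (Algebra.adjoin R (e '' I)) = ospan I := by
  apply le_antisymm
  · rw [Algebra.adjoin_eq_span]
    refine Submodule.span_le.2 ?_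
    intro x hx
    have : ∃ l : List ℤ, (∀ x ∈ l, x ∈ I) ∧ x = mon l := by
      induction hx using Submonoid.closure_induction with
      | mem x hx =>
        obtain ⟨n, hn, rfl⟩ := hx
        exact ⟨[n], by simpa using hn, by simp [mon]⟩
      | one => exact ⟨[], by simp, by simp [mon]⟩
      | mul x y _ _ h1 h2 =>
        obtain ⟨l, hl, rfl⟩ := h1
        obtain ⟨l', hl', rfl⟩ := h2
        refine ⟨l ++ l', ?_, (mon_append _ _).symm⟩
        intro x hx
        rcases List.mem_append.1 hx with h | h
        · exact hl x h
        · exact hl' x h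
    obtain ⟨l, hl, rfl⟩ := this
    exact mon_mem_ospan I hI l hl
  · refine Submodule.span_le.2 ?_
    rintro _ ⟨s, hs, rfl⟩
    refine Subalgebra.list_prod_mem _ ?_
    intro x hx
    obtain ⟨n, hn, rfl⟩ := List.mem_map.1 hx
    exact Algebra.subset_adjoin ⟨n, hs n (by simpa using hn), rfl⟩

section Rep

variable {A : Type*} [CommRing A] {N : ℕ}

/-- Structure factor. -/
def cf (X : Fin N → ℤ → A) (h : A) (i j : Fin N) : A :=
  if i < j then X i 1 - X j 1 + h else -(X i 1 - X j 1 + h)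

lemma cf_rel (X : Fin N → ℤ → A) (h : A) (i j : Fin N) (hij : i ≠ j) :
    (X i 1 - X j 1 - h) * cf X h i j = (X i 1 - X j 1 + h) * cf X h j i := by
  rcases lt_or_gt_of_ne hij with h1 | h1
  · simp only [cf, h1, h1.not_gt, if_true, if_false]; ring
  · simp only [cf, h1, h1.not_gt, if_true, if_false]; ring

/-- The action of the generator `e n`. -/
def op (X : Fin N → ℤ → A) (h : A) (n : ℤ) (f : Finset (Fin N) → A) (S : Finset (Fin N)) : A :=
  ∑ i ∈ S, X i n * (∏ j ∈ S.erase i, cf X h i j) * f (S.erase i)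

/-- The symmetric part of the action of a product of two generators. -/
def kf (X : Fin N → ℤ → A) (h : A) (f : Finset (Fin N) → A) (S : Finset (Fin N))
    (i j : Fin N) : A :=
  (∏ k ∈ (S.erase i).erase j, cf X h i k) * (∏ k ∈ (S.erase i).erase j, cf X h j k) *
    f ((S.erase i).erase j)

lemma kf_symm (X : Fin N → ℤ → A) (h : A) (f : Finset (Fin N) → A) (S : Finset (Fin N))
    (i j : Fin N) : kf X h f S i j = kf X h f S j i := by
  simp only [kf, Finset.erase_right_comm (a := i) (b := j)]; ring

lemma op_op (X : Fin N → ℤ → A) (h : A) (m n : ℤ) (f : Finset (Fin N) → A)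
    (S : Finset (Fin N)) : op X h m (op X h n f) S =
      ∑ p ∈ S.offDiag, X p.1 m * X p.2 n * cf X h p.1 p.2 * kf X h f S p.1 p.2 := by
  rw [Finset.sum_finset_product' S.offDiag S (fun i => S.erase i)
    (f := fun i j => X i m * X j n * cf X h i j * kf X h f S i j)]
  · unfold op
    refine Finset.sum_congr rfl fun i _ => ?_
    rw [Finset.mul_sum]
    refine Finset.sum_congr rfl fun j hj => ?_
    rw [← Finset.mul_prod_erase _ _ hj, kf]
    ring
  · rintro ⟨i, j⟩
    simp only [Finset.mem_offDiag, Finset.mem_erase]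
    tauto

lemma op_op' (X : Fin N → ℤ → A) (h : A) (m n : ℤ) (f : Finset (Fin N) → A)
    (S : Finset (Fin N)) : op X h m (op X h n f) S =
      ∑ p ∈ S.offDiag, X p.2 m * X p.1 n * cf X h p.2 p.1 * kf X h f S p.1 p.2 := by
  rw [op_op]
  refine Finset.sum_nbij' Prod.swap Prod.swap ?_ ?_ ?_ ?_ ?_
  · rintro ⟨i, j⟩; simp only [Finset.mem_offDiag, Prod.swap]; tauto
  · rintro ⟨i, j⟩; simp only [Finset.mem_offDiag, Prod.swap]; tauto
  · simp
  · simp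
  · rintro ⟨i, j⟩ _
    simp only [Prod.swap]
    rw [kf_symm]

lemma op_rel (X : Fin N → ℤ → A) (hX : ∀ i n, X i (n + 1) = X i 1 * X i n) (h : A) (m n : ℤ)
    (f : Finset (Fin N) → A) (S : Finset (Fin N)) :
    op X h (m + 1) (op X h n f) S - op X h n (op X h (m + 1) f) S
      - op X h m (op X h (n + 1) f) S + op X h (n + 1) (op X h m f) S =
      h * (op X h m (op X h n f) S + op X h n (op X h m f) S) := by
  rw [op_op X h (m + 1) n, op_op' X h n (m + 1), op_op X h m (n + 1), op_op' X h (n + 1) m,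
    op_op X h m n, op_op' X h n m, ← Finset.sum_sub_distrib, ← Finset.sum_sub_distrib,
    ← Finset.sum_add_distrib, ← Finset.sum_add_distrib, Finset.mul_sum]
  refine Finset.sum_congr rfl ?_
  rintro ⟨i, j⟩ hp
  have hij : i ≠ j := by simp only [Finset.mem_offDiag] at hp; exact hp.2.2
  have := cf_rel X h i j hij
  simp only [hX]
  linear_combination X i m * X j n * kf X h f S i j * this

/-- The vacuum. -/
def vac (S : Finset (Fin N)) : A := if S = ∅ then 1 else 0

/-- Action of a word on the vacuum. -/
def gw (X : Fin N → ℤ → A) (h : A) : List ℤ → Finset (Fin N) → A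
  | [] => vac
  | n :: l => op X h n (gw X h l)

lemma gw_map {B : Type*} [CommRing B] (φ : A →+* B) (X : Fin N → ℤ → A) (h : A) (l : List ℤ) :
    ∀ S, φ (gw X h l S) = gw (fun i n => φ (X i n)) (φ h) l S := by
  have hc : ∀ i j, φ (cf X h i j) = cf (fun i n => φ (X i n)) (φ h) i j := by
    intro i j
    unfold cf
    split_ifs <;> simp
  induction l with
  | nil => intro S; simp only [gw, vac]; split_ifs <;> simp
  | cons n l ih => intro S; simp only [gw, op, map_sum, map_mul, map_prod, ih, hc]

/-- The classical limit of `gw` with the Vandermonde factor removed. -/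
def pw (X : Fin N → ℤ → A) : List ℤ → Finset (Fin N) → A
  | [] => vac
  | n :: l => fun S => ∑ i ∈ S, X i n * pw X l (S.erase i)

/-- One Vandermonde factor. -/
def dv (X : Fin N → ℤ → A) (i j : Fin N) : A := if i < j then X i 1 - X j 1 else 1

/-- Vandermonde factor. -/
def vd (X : Fin N → ℤ → A) (S : Finset (Fin N)) : A := ∏ i ∈ S, ∏ j ∈ S, dv X i j

lemma cf_zero (X : Fin N → ℤ → A) (i j : Fin N) (hij : i ≠ j) :
    cf X 0 i j = dv X i j * dv X j i := by
  rcases lt_or_gt_of_ne hij with h1 | h1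
  · simp only [cf, dv, h1, h1.not_gt, if_true, if_false]; ring
  · simp only [cf, dv, h1, h1.not_gt, if_true, if_false]; ring

lemma vd_erase (X : Fin N → ℤ → A) (S : Finset (Fin N)) (i : Fin N) (hi : i ∈ S) :
    (∏ j ∈ S.erase i, cf X 0 i j) * vd X (S.erase i) = vd X S := by
  have h1 : ∏ j ∈ S.erase i, cf X 0 i j =
      (∏ j ∈ S.erase i, dv X i j) * ∏ j ∈ S.erase i, dv X j i := by
    rw [← Finset.prod_mul_distrib]
    exact Finset.prod_congr rfl fun j hj => cf_zero X i j (Finset.ne_of_mem_erase hj).symm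
  have h2 : dv X i i = 1 := by simp [dv]
  unfold vd
  rw [h1, ← Finset.mul_prod_erase S (fun a => ∏ j ∈ S, dv X a j) hi]
  simp only [← Finset.mul_prod_erase S (dv X _) hi, h2, one_mul, Finset.prod_mul_distrib]
  ring

lemma gw_zero (X : Fin N → ℤ → A) (l : List ℤ) :
    ∀ S, gw X 0 l S = vd X S * pw X l S := by
  induction l with
  | nil =>
    intro S
    simp only [gw, pw, vac]
    split_ifs with h
    · subst h; simp [vd]
    · simp
  | cons n l ih =>
    intro S
    simp only [gw, pw, op, ih, Finset.mul_sum]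
    refine Finset.sum_congr rfl fun i hi => ?_
    rw [← vd_erase X S i hi]
    ring

end Rep

section Laurent

variable {N : ℕ}

/-- The Laurent monomial. -/
def lx (K : Type) [CommRing K] (i : Fin N) (n : ℤ) : AddMonoidAlgebra K (Fin N → ℤ) :=
  AddMonoidAlgebra.single (Pi.single i n) 1

lemma lx_succ (K : Type) [CommRing K] (i : Fin N) (n : ℤ) :
    lx K i (n + 1) = lx K i 1 * lx K i n := by
  rw [lx, lx, lx, AddMonoidAlgebra.single_mul_single, add_comm n 1, Pi.single_add, one_mul]

lemma vd_ne_zero (S : Finset (Fin N)) : vd (lx ℂ) S ≠ 0 := by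
  unfold vd
  refine Finset.prod_ne_zero_iff.2 fun i _ => Finset.prod_ne_zero_iff.2 fun j _ => ?_
  unfold dv
  split_ifs with h
  · rw [sub_ne_zero]
    unfold lx
    rw [Ne, AddMonoidAlgebra.single_left_inj one_ne_zero]
    intro h2
    have h3 := congrFun h2 i
    simp [h.ne] at h3
  · exact one_ne_zero

lemma pw_coeff (l : List ℤ) : ∀ (S : Finset (Fin N)) (μ : Fin N → ℤ),
    ∃ k : ℕ, (pw (lx ℂ) l S).coeff μ = k ∧
      (k ≠ 0 ↔ (∀ i ∉ S, μ i = 0) ∧ S.val.map μ = (l : Multiset ℤ)) := by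
  induction l with
  | nil =>
    intro S μ
    by_cases hS : S = ∅
    · subst hS
      by_cases hμ : μ = 0
      · subst hμ
        exact ⟨1, by simp [pw, vac, AddMonoidAlgebra.one_def], by simp⟩
      · refine ⟨0, by simp [pw, vac, AddMonoidAlgebra.one_def, Ne.symm hμ], ?_⟩
        simpa using Function.ne_iff.1 hμ
    · exact ⟨0, by simp [pw, vac, hS], by simp [hS]⟩
  | cons n l ih =>
    intro S μ
    choose k hk hk2 using fun i : Fin N => ih (S.erase i) (-(Pi.single i n) + μ)
    refine ⟨∑ i ∈ S, k i, ?_, ?_⟩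
    · simp only [pw, AddMonoidAlgebra.coeff_sum, Finsupp.coe_finsetSum, Finset.sum_apply]
      push_cast
      refine Finset.sum_congr rfl fun i _ => ?_
      rw [lx, AddMonoidAlgebra.coeff_single_mul_apply, one_mul, hk]
    · have hmap : ∀ i ∈ S, μ i = n →
          (S.val.map μ = ((n :: l : List ℤ) : Multiset ℤ) ↔
          (S.erase i).val.map (-(Pi.single i n) + μ) = (l : Multiset ℤ)) := by
        intro i hi hn
        have h1 : (S.erase i).val.map (-(Pi.single i n) + μ) = (S.erase i).val.map μ := by
          refine Multiset.map_congr rfl fun j hj => ?_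
          have : j ≠ i := Finset.ne_of_mem_erase (s := S) hj
          simp [this]
        have h2 : S.val = i ::ₘ (S.erase i).val := by
          rw [Finset.erase_val, Multiset.cons_erase hi]
        rw [h1, h2, Multiset.map_cons, hn, ← Multiset.cons_coe, Multiset.cons_inj_right]
      have hoff : ∀ i ∈ S, ((∀ j ∉ S.erase i, (-(Pi.single i n) + μ : Fin N → ℤ) j = 0) ↔
          (μ i = n ∧ ∀ j ∉ S, μ j = 0)) := by
        intro i hi
        constructor
        · intro h
          refine ⟨?_, ?_⟩
          · have := h i (by simp)
            simp at this
            omega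
          · intro j hj
            have hji : j ≠ i := by rintro rfl; exact hj hi
            have := h j (by simp [hj])
            simpa [hji] using this
        · rintro ⟨h1, h2⟩ j hj
          by_cases hji : j = i
          · subst hji; simp [h1]
          · have := h2 j (by simpa [hji] using hj)
            simp [hji, this]
      rw [Ne, Finset.sum_eq_zero_iff]
      push Not
      constructor
      · rintro ⟨i, hi, hki⟩
        obtain ⟨h1, h2⟩ := (hk2 i).1 hki
        rw [hoff i hi] at h1
        exact ⟨h1.2, (hmap i hi h1.1).2 h2⟩
      · rintro ⟨h1, h2⟩
        have : n ∈ S.val.map μ := by rw [h2]; simp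
        obtain ⟨i, hi, hin⟩ := Multiset.mem_map.1 this
        refine ⟨i, hi, (hk2 i).2 ⟨(hoff i hi).2 ⟨hin, h1⟩, (hmap i hi hin).1 h2⟩⟩

/-- The Laurent polynomial ring over `R`. -/
abbrev LR (N : ℕ) : Type := AddMonoidAlgebra R (Fin N → ℤ)

/-- Action of `e n` as an `R`-linear endomorphism. -/
def opL (N : ℕ) (n : ℤ) : Module.End R (Finset (Fin N) → LR N) where
  toFun := op (lx R) (algebraMap R (LR N) hbar) n
  map_add' f g := by
    funext S
    simp only [op, Pi.add_apply, mul_add, Finset.sum_add_distrib]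
  map_smul' r f := by
    funext S
    simp only [op, Pi.smul_apply, mul_smul_comm, Finset.smul_sum, RingHom.id_apply]

/-- The representation of the free algebra. -/
def repF (N : ℕ) : FreeAlgebra R ℤ →ₐ[R] Module.End R (Finset (Fin N) → LR N) :=
  FreeAlgebra.lift R (opL N)

lemma repF_E (N : ℕ) (n : ℤ) : repF N (E n) = opL N n := by
  simp [repF, E]

/-- The representation of `U`. -/
def rep (N : ℕ) : U →ₐ[R] Module.End R (Finset (Fin N) → LR N) :=
  RingQuot.liftAlgHom R ⟨repF N, by
    rintro _ _ ⟨m, n⟩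
    simp only [map_add, map_sub, map_mul, map_smul, repF_E]
    refine LinearMap.ext fun f => ?_
    funext S
    have := op_rel (lx R) (lx_succ R) (algebraMap R (LR N) hbar) m n f S
    rw [← Algebra.smul_def] at this
    exact this⟩

lemma rep_e (N : ℕ) (n : ℤ) : rep N (e n) = opL N n := by
  rw [rep, e, RingQuot.liftAlgHom_mkAlgHom_apply, repF_E]

/-- The functional detecting monomials of length `N`. -/
def top (N : ℕ) : U →ₗ[R] LR N :=
  (LinearMap.proj Finset.univ) ∘ₗ (LinearMap.applyₗ vac) ∘ₗ (rep N).toLinearMap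

lemma top_mon (N : ℕ) (l : List ℤ) :
    top N (mon l) = gw (lx R) (algebraMap R (LR N) hbar) l Finset.univ := by
  have : rep N (mon l) vac = gw (lx R) (algebraMap R (LR N) hbar) l := by
    induction l with
    | nil => simp [mon, gw]
    | cons n l ih =>
      rw [mon_cons, map_mul, Module.End.mul_apply, ih, rep_e]
      rfl
  simp only [top, LinearMap.comp_apply, LinearMap.proj_apply, LinearMap.applyₗ_apply_apply]
  exact congrFun this _

/-- Reduction mod `ℏ`. -/
def red (N : ℕ) : LR N →+* AddMonoidAlgebra ℂ (Fin N → ℤ) :=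
  AddMonoidAlgebra.mapRingHom (Fin N → ℤ) PowerSeries.constantCoeff

lemma red_smul (N : ℕ) (r : R) (x : LR N) :
    red N (r • x) = PowerSeries.constantCoeff r • red N x := by
  ext μ
  simp [red]

lemma red_top_mon (N : ℕ) (l : List ℤ) :
    red N (top N (mon l)) = vd (lx ℂ) Finset.univ * pw (lx ℂ) l Finset.univ := by
  rw [top_mon, gw_map, ← gw_zero]
  have h1 : red N (algebraMap R (LR N) hbar) = 0 := by
    rw [Algebra.algebraMap_eq_smul_one, red_smul]; simp [hbar]
  have h2 : (fun i n => red N (lx R i n)) = lx ℂ := by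
    funext i n
    simp [red, lx]
  rw [h1, h2]

lemma const_zero (c : Multiset ℤ →₀ R)
    (hc : ∀ N, top N (Finsupp.linearCombination R omon c) = 0) (s : Multiset ℤ) :
    PowerSeries.constantCoeff (c s) = 0 := by
  obtain ⟨l, rfl⟩ := Quot.exists_rep s
  change PowerSeries.constantCoeff (c (l : Multiset ℤ)) = 0
  have h := congrArg (red l.length) (hc l.length)
  rw [Finsupp.linearCombination_apply, Finsupp.sum, map_sum, map_sum, map_zero] at h
  simp only [map_smul, red_smul, omon, red_top_mon, ← mul_smul_comm] at h
  rw [← Finset.mul_sum] at h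
  have h2 := (mul_eq_zero.1 h).resolve_left (vd_ne_zero _)
  have h3 := congrArg (fun x => AddMonoidAlgebra.coeff x l.get) h2
  simp only [AddMonoidAlgebra.coeff_sum, Finsupp.coe_finsetSum, Finset.sum_apply,
    AddMonoidAlgebra.coeff_smul_apply, AddMonoidAlgebra.coeff_zero, Finsupp.coe_zero,
    Pi.zero_apply] at h3
  have hl : (Finset.univ : Finset (Fin l.length)).val.map l.get = (l : Multiset ℤ) := by
    simp
  by_cases hmem : (l : Multiset ℤ) ∈ c.support
  · rw [Finset.sum_eq_single_of_mem _ hmem] at h3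
    · obtain ⟨k, hk, hk2⟩ := pw_coeff ((l : Multiset ℤ).sort (· ≤ ·)) Finset.univ l.get
      rw [hk, smul_eq_mul] at h3
      refine (mul_eq_zero.1 h3).resolve_right ?_
      refine Nat.cast_ne_zero.2 ?_
      rw [hk2, Multiset.sort_eq]
      exact ⟨by simp, hl⟩
    · intro t _ hne
      obtain ⟨k, hk, hk2⟩ := pw_coeff (t.sort (· ≤ ·)) Finset.univ l.get
      rw [hk]
      have : k = 0 := by
        by_contra hk0
        have := (hk2.1 hk0).2
        rw [Multiset.sort_eq, hl] at this
        exact hne this.symm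
      simp [this]
  · rw [Finsupp.notMem_support_iff.1 hmem, map_zero]

lemma coeff_zero_all (k : ℕ) : ∀ (c : Multiset ℤ →₀ R)
    (_ : ∀ N, top N (Finsupp.linearCombination R omon c) = 0) (s : Multiset ℤ),
    PowerSeries.coeff k (c s) = 0 := by
  induction k with
  | zero =>
    intro c hc s
    simpa using const_zero c hc s
  | succ k ih =>
    intro c hc s
    have h0 := const_zero c hc
    let d : Multiset ℤ →₀ R :=
      c.mapRange (fun r => PowerSeries.mk fun n => PowerSeries.coeff (n + 1) r) (by ext; simp)
    have hd : c = (PowerSeries.X : R) • d := by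
      ext t n
      cases n with
      | zero => simpa using h0 t
      | succ n => simp [d, PowerSeries.coeff_succ_X_mul]
    have hd2 : ∀ N, top N (Finsupp.linearCombination R omon d) = 0 := by
      intro N
      have := hc N
      rw [hd, map_smul, map_smul] at this
      ext1
      ext1 μ
      have h4 := congrArg (fun x => AddMonoidAlgebra.coeff x μ) this
      simp only [AddMonoidAlgebra.coeff_smul_apply, smul_eq_mul, AddMonoidAlgebra.coeff_zero,
        Finsupp.coe_zero, Pi.zero_apply] at h4 ⊢
      exact (mul_eq_zero.1 h4).resolve_left PowerSeries.X_ne_zero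
    have := ih d hd2 s
    simpa [d] using this

lemma omon_li : LinearIndependent R omon := by
  refine (linearIndependent_iff (R := R) (M := U) (v := omon)).2 ?_
  intro c hc
  ext s k
  simpa using coeff_zero_all k c (by intro N; rw [hc, map_zero]) s

end Laurent

lemma Ult_eq : Subalgebra.toSubmodule Ult = ospan (Set.Iio 0) := by
  rw [← adjoin_le_ospan _ Set.ordConnected_Iio, Ult]
  congr 2
  ext x
  simp [eq_comm]

lemma Uge_eq : Subalgebra.toSubmodule Uge = ospan (Set.Ici 0) := by
  rw [← adjoin_le_ospan _ Set.ordConnected_Ici, Uge]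
  congr 2
  ext x
  constructor
  · rintro ⟨n, rfl⟩; exact ⟨n, by simp, rfl⟩
  · rintro ⟨n, hn, rfl⟩
    exact ⟨n.toNat, by simp [Int.toNat_of_nonneg hn]⟩

lemma ospan_univ : ospan Set.univ = ⊤ := by
  rw [← adjoin_le_ospan _ Set.ordConnected_univ, Algebra.toSubmodule_eq_top, eq_top_iff]
  rintro x -
  obtain ⟨y, rfl⟩ := RingQuot.mkAlgHom_surjective R ERel x
  induction y using FreeAlgebra.induction with
  | grade0 r => rw [AlgHom.commutes]; exact Subalgebra.algebraMap_mem _ r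
  | grade1 n => exact Algebra.subset_adjoin ⟨n, trivial, rfl⟩
  | mul a b ha hb => rw [map_mul]; exact Subalgebra.mul_mem _ ha hb
  | add a b ha hb => rw [map_add]; exact Subalgebra.add_mem _ ha hb

/-- Multisets supported in `I`. -/
abbrev MS (I : Set ℤ) : Type := {s : Multiset ℤ // ∀ x ∈ s, x ∈ I}

lemma ospan_eq (I : Set ℤ) :
    Submodule.span R (Set.range fun s : MS I => omon s.1) = ospan I := by
  unfold ospan
  congr 1
  ext x
  simp [MS]

/-- Basis of `ospan I`. -/
def obasis (I : Set ℤ) : Module.Basis (MS I) R (ospan I) :=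
  (Module.Basis.span (omon_li.comp (fun s : MS I => s.1) Subtype.val_injective)).map
    (LinearEquiv.ofEq _ _ (ospan_eq I))

lemma obasis_apply (I : Set ℤ) (s : MS I) : (obasis I s : U) = omon s.1 := by
  simp [obasis, Module.Basis.span_apply]

/-- The basis of ordered monomials of `U`. -/
def ubasis : Module.Basis (Multiset ℤ) R U :=
  Module.Basis.mk omon_li (by
    rw [← ospan_univ, ← ospan_eq]
    refine Submodule.span_mono ?_
    rintro _ ⟨s, rfl⟩
    exact ⟨s.1, rfl⟩)

/-- Splitting a multiset of integers according to sign. -/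
def splitEquiv : MS (Set.Iio 0) × MS (Set.Ici 0) ≃ Multiset ℤ where
  toFun p := p.1.1 + p.2.1
  invFun s := (⟨s.filter (· < 0), fun x hx => (Multiset.mem_filter.1 hx).2⟩,
    ⟨s.filter (fun x => ¬ x < 0), fun x hx => not_lt.1 (Multiset.mem_filter.1 hx).2⟩)
  left_inv := by
    rintro ⟨⟨s, hs⟩, ⟨t, ht⟩⟩
    have h1 : s.filter (· < 0) = s := Multiset.filter_eq_self.2 hs
    have h2 : t.filter (· < 0) = 0 :=
      Multiset.filter_eq_nil.2 fun x hx => not_lt.2 (ht x hx)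
    have h3 : s.filter (fun x => ¬ x < 0) = 0 :=
      Multiset.filter_eq_nil.2 fun x hx => not_not.2 (hs x hx)
    have h4 : t.filter (fun x => ¬ x < 0) = t :=
      Multiset.filter_eq_self.2 fun x hx => not_lt.2 (ht x hx)
    refine Prod.ext (Subtype.ext ?_) (Subtype.ext ?_)
    · simp only [Multiset.filter_add, h1, h2, add_zero]
    · simp only [Multiset.filter_add, h3, h4, zero_add]
  right_inv s := Multiset.filter_add_not _ s

lemma omon_split (p : MS (Set.Iio 0) × MS (Set.Ici 0)) :
    omon p.1.1 * omon p.2.1 = omon (splitEquiv p) := by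
  obtain ⟨⟨s, hs⟩, ⟨t, ht⟩⟩ := p
  simp only [omon, ← mon_append]
  congr 1
  refine List.Perm.eq_of_pairwise' (r := (· ≤ ·)) ?_ (Multiset.pairwise_sort _ _) ?_
  · rw [List.pairwise_append]
    refine ⟨Multiset.pairwise_sort _ _, Multiset.pairwise_sort _ _, ?_⟩
    intro a ha b hb
    have h1 := hs a (by simpa using ha)
    have h2 := ht b (by simpa using hb)
    simp only [Set.mem_Iio, Set.mem_Ici] at h1 h2
    omega
  · rw [← Multiset.coe_eq_coe, ← Multiset.coe_add]
    simp [splitEquiv]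

lemma mulMap_bij_aux (P Q : Submodule R U) (hP : P = ospan (Set.Iio 0))
    (hQ : Q = ospan (Set.Ici 0)) : Function.Bijective (Submodule.mulMap P Q) := by
  subst hP hQ
  let b := (obasis (Set.Iio 0)).tensorProduct (obasis (Set.Ici 0))
  have h : Submodule.mulMap (ospan (Set.Iio 0)) (ospan (Set.Ici 0)) =
      (b.equiv ubasis splitEquiv).toLinearMap := by
    refine b.ext fun p => ?_
    rw [LinearEquiv.coe_coe, Module.Basis.equiv_apply]
    have h1 : b p = obasis (Set.Iio 0) p.1 ⊗ₜ[R] obasis (Set.Ici 0) p.2 :=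
      Module.Basis.tensorProduct_apply' _ _ p
    have h2 : ubasis (splitEquiv p) = omon (splitEquiv p) := Module.Basis.mk_apply _ _ _
    rw [h1, h2, ← omon_split]
    refine (Submodule.mulMap_tmul _ _ _ _).trans ?_
    rw [obasis_apply, obasis_apply]
  rw [h]
  exact (b.equiv ubasis splitEquiv).bijective

end PBW

/-- multiplication induces an isomorphism of `R`-modules
`U^{<0} ⊗_R U^{≥0} → U`. -/
theorem mulMap_lt_ge_bijective :
    Function.Bijective
      (Submodule.mulMap (Subalgebra.toSubmodule Ult) (Subalgebra.toSubmodule Uge)) := by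
  exact mulMap_bij_aux _ _ Ult_eq Uge_eq

end
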